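/- Let M be a compact metric space equipped with a Borel probability measure m (the normalized Lebesgue measure), let f : M → M be Borel measurable, and let {K_i}_{i≥1} be a decreasing chain of nonempty compact f-invariant sets, each with basin of statistical attraction of m-measure at least α > 0. Then K := ⋂_i K_i is a nonempty compact f-invariant set whose basin of statistical attraction B(K) satisfies m(B(K)) ≥ α. -/

import Mathlib

open MeasureTheory Filter Metric Set
open scoped Classical ENNReal Topology

/-- Frequency of visits, up to time `n - 1`, of the orbit of `x` to the
`ε`-neighborhood of `K`: `(1/n) · #{0 ≤ j ≤ n−1 : dist(f^j(x), K) < ε}`. -/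
noncomputable def visitFreq {M : Type*} [MetricSpace M] (f : M → M) (K : Set M) (ε : ℝ)
    (x : M) (n : ℕ) : ℝ :=
  (((Finset.range n).filter (fun j => infDist (f^[j] x) K < ε)).card : ℝ) / n

/-- Basin of statistical attraction of `K`. -/
def statBasin {M : Type*} [MetricSpace M] (f : M → M) (K : Set M) : Set M :=
  {x | ∀ ε > 0, Tendsto (fun n => visitFreq f K ε x n) atTop (𝓝 1)}

/-- The auxiliary basin `B_ε(K) = {x : liminf_n (1/n)·#{j < n : dist(f^j(x),K) < ε} > 1 − ε}`. -/
def statBasinEps {M : Type*} [MetricSpace M] (f : M → M) (K : Set M) (ε : ℝ) : Set M :=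
  {x | 1 - ε < atTop.liminf (fun n => visitFreq f K ε x n)}

/-!
Everything rests on the identity `B(⋂ Kᵢ) = ⋂ B(Kᵢ)`. Basins grow with the set, which gives one
inclusion. For the other, compactness puts some `Kᵢ` inside the `ε/2`-thickening of `⋂ Kᵢ`, so the
`ε/2`-neighbourhood of that `Kᵢ`, where an orbit of `B(Kᵢ)` spends almost all its time, lies in the
`ε`-neighbourhood of `⋂ Kᵢ`. Basins being measurable, the measure bound follows by continuity from
above.
-/

theorem infDist_lt_add_of_subset_thickening {X : Type*} [PseudoMetricSpace X] {s t : Set X}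
    {ε δ : ℝ} {x : X} (hs : s.Nonempty) (hst : s ⊆ thickening δ t) (hx : infDist x s < ε) :
    infDist x t < ε + δ := by
  have ht : t.Nonempty := (thickening_nonempty_iff.1 (hs.mono hst)).2
  rw [← mem_thickening_iff_infDist_lt ht]
  exact thickening_thickening_subset ε δ t
    (thickening_subset_of_subset ε hst ((mem_thickening_iff_infDist_lt hs).2 hx))

theorem exists_subset_thickening_iInter {X ι : Type*} [EMetricSpace X] [Nonempty ι]
    {K : ι → Set X} (hdir : Directed (· ⊇ ·) K) (hc : ∀ i, IsCompact (K i)) {δ : ℝ} (hδ : 0 < δ) :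
    ∃ i, K i ⊆ thickening δ (⋂ i, K i) :=
  exists_subset_nhds_of_isCompact hdir hc fun _ hx =>
    isOpen_thickening.mem_nhds (self_subset_thickening hδ _ hx)

section Basin

variable {M : Type*} [MetricSpace M] {f : M → M} {K L : Set M} {ε δ : ℝ} {x : M}

theorem visitFreq_le_one (f : M → M) (K : Set M) (ε : ℝ) (x : M) (n : ℕ) :
    visitFreq f K ε x n ≤ 1 := by
  have hcard : ((Finset.range n).filter fun j => infDist (f^[j] x) K < ε).card ≤ n :=
    (Finset.card_filter_le _ _).trans_eq (Finset.card_range n)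
  exact div_le_one_of_le₀ (mod_cast hcard) n.cast_nonneg

theorem visitFreq_le_visitFreq (h : ∀ y, infDist y K < ε → infDist y L < δ) (n : ℕ) :
    visitFreq f K ε x n ≤ visitFreq f L δ x n := by
  have hcard : ((Finset.range n).filter fun j => infDist (f^[j] x) K < ε).card ≤
      ((Finset.range n).filter fun j => infDist (f^[j] x) L < δ).card :=
    Finset.card_le_card (Finset.monotone_filter_right _ fun j _ => h (f^[j] x))
  exact div_le_div_of_nonneg_right (mod_cast hcard) n.cast_nonneg

theorem tendsto_visitFreq_one_of_infDist_imp (h : ∀ y, infDist y K < ε → infDist y L < δ)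
    (hK : Tendsto (visitFreq f K ε x) atTop (𝓝 1)) :
    Tendsto (visitFreq f L δ x) atTop (𝓝 1) :=
  tendsto_of_tendsto_of_tendsto_of_le_of_le hK tendsto_const_nhds
    (visitFreq_le_visitFreq h) (visitFreq_le_one f L δ x)

theorem statBasin_eq_iInter_nat (f : M → M) (K : Set M) :
    statBasin f K =
      ⋂ k : ℕ, {x | Tendsto (visitFreq f K (1 / ((k : ℝ) + 1)) x) atTop (𝓝 1)} := by
  refine Subset.antisymm (fun x hx => mem_iInter.2 fun k => hx _ Nat.one_div_pos_of_nat) ?_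
  intro x hx ε hε
  obtain ⟨k, hk⟩ := exists_nat_one_div_lt hε
  exact tendsto_visitFreq_one_of_infDist_imp (fun _ hy => hy.trans hk) (mem_iInter.1 hx k)

theorem statBasin_mono (hK : K.Nonempty) (hKL : K ⊆ L) : statBasin f K ⊆ statBasin f L :=
  fun _ hx ε hε => tendsto_visitFreq_one_of_infDist_imp
    (fun _ => (infDist_le_infDist_of_subset hKL hK).trans_lt) (hx ε hε)

theorem statBasin_iInter {ι : Type*} [Nonempty ι] {K : ι → Set M}
    (hdir : Directed (· ⊇ ·) K) (hne : ∀ i, (K i).Nonempty) (hc : ∀ i, IsCompact (K i)) :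
    statBasin f (⋂ i, K i) = ⋂ i, statBasin f (K i) := by
  have hneInter : (⋂ i, K i).Nonempty :=
    IsCompact.nonempty_iInter_of_directed_nonempty_isCompact_isClosed K hdir hne hc
      fun i => (hc i).isClosed
  refine (subset_iInter fun i => statBasin_mono hneInter (iInter_subset K i)).antisymm ?_
  intro x hx ε hε
  obtain ⟨i, hi⟩ := exists_subset_thickening_iInter hdir hc (half_pos hε)
  refine tendsto_visitFreq_one_of_infDist_imp (fun y hy => ?_)
    (mem_iInter.1 hx i (ε / 2) (half_pos hε))
  simpa only [add_halves] using infDist_lt_add_of_subset_thickening (hne i) hi hy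

end Basin

section Measure

variable {M : Type*} [MetricSpace M] [MeasurableSpace M] [OpensMeasurableSpace M] {f : M → M}

theorem measurable_visitFreq (hf : Measurable f) (K : Set M) (ε : ℝ) (n : ℕ) :
    Measurable fun x => visitFreq f K ε x n := by
  have hvisit (j : ℕ) : MeasurableSet {x | infDist (f^[j] x) K < ε} :=
    measurableSet_lt (hf.iterate j).infDist measurable_const
  simp only [visitFreq, Finset.natCast_card_filter]
  exact (Finset.measurable_fun_sum _ fun j _ =>
    Measurable.ite (hvisit j) measurable_const measurable_const).div_const _

theorem measurableSet_statBasin (hf : Measurable f) (K : Set M) :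
    MeasurableSet (statBasin f K) := by
  rw [statBasin_eq_iInter_nat]
  exact MeasurableSet.iInter fun k => measurableSet_tendsto (𝓝 1) (measurable_visitFreq hf K _)

theorem measure_statBasin_iInter {ι : Type*} [Countable ι] {m : Measure M}
    (hf : Measurable f) {K : ι → Set M} (hdir : Directed (· ⊇ ·) K)
    (hne : ∀ i, (K i).Nonempty) (hc : ∀ i, IsCompact (K i))
    (hfin : ∃ i, m (statBasin f (K i)) ≠ ∞) :
    m (statBasin f (⋂ i, K i)) = ⨅ i, m (statBasin f (K i)) := by
  have : Nonempty ι := hfin.nonempty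
  have hdirBasin : Directed (· ⊇ ·) fun i => statBasin f (K i) := by
    intro i j
    obtain ⟨k, hki, hkj⟩ := hdir i j
    exact ⟨k, statBasin_mono (hne k) hki, statBasin_mono (hne k) hkj⟩
  rw [statBasin_iInter hdir hne hc]
  exact hdirBasin.measure_iInter (fun i => (measurableSet_statBasin hf (K i)).nullMeasurableSet)
    hfin

theorem iInter_chain_statBasin_measure_general {ι : Type*} [Countable ι]
    {m : Measure M} (hf : Measurable f) {a : ℝ≥0∞} {K : ι → Set M}
    (hdir : Directed (· ⊇ ·) K) (hne : ∀ i, (K i).Nonempty) (hc : ∀ i, IsCompact (K i))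
    (hinv : ∀ i, f ⁻¹' (K i) = K i) (hfin : ∃ i, m (statBasin f (K i)) ≠ ∞)
    (hbasin : ∀ i, a ≤ m (statBasin f (K i))) :
    (⋂ i, K i).Nonempty ∧ IsCompact (⋂ i, K i) ∧ f ⁻¹' (⋂ i, K i) = ⋂ i, K i ∧
      a ≤ m (statBasin f (⋂ i, K i)) := by
  have : Nonempty ι := hfin.nonempty
  have hcompact : IsCompact (⋂ i, K i) := by
    obtain ⟨i, -⟩ := hfin
    exact (hc i).of_isClosed_subset (isClosed_iInter fun j => (hc j).isClosed) (iInter_subset K i)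
  refine ⟨?_, hcompact, ?_, ?_⟩
  · exact IsCompact.nonempty_iInter_of_directed_nonempty_isCompact_isClosed K hdir hne hc
      fun i => (hc i).isClosed
  · exact preimage_iInter.trans (iInter_congr hinv)
  · rw [measure_statBasin_iInter hf hdir hne hc hfin]
    exact le_iInf hbasin

end Measure

/-- the intersection of a decreasing chain of nonempty compact `f`-invariant
sets, each whose basin of statistical attraction has `m`-measure at least `α > 0`, is a
nonempty compact `f`-invariant set whose basin has `m`-measure at least `α`. -/
theorem iInter_chain_statBasin_measure {M : Type*} [MetricSpace M] [CompactSpace M]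
    [MeasurableSpace M] [BorelSpace M] (m : Measure M) [IsProbabilityMeasure m]
    (f : M → M) (hf : Measurable f) (α : ℝ) (hα : 0 < α)
    (K : ℕ → Set M) (hne : ∀ i, (K i).Nonempty) (hc : ∀ i, IsCompact (K i))
    (hinv : ∀ i, f ⁻¹' (K i) = K i) (hdec : ∀ i, K (i + 1) ⊆ K i)
    (hbasin : ∀ i, ENNReal.ofReal α ≤ m (statBasin f (K i))) :
    (⋂ i, K i).Nonempty ∧ IsCompact (⋂ i, K i) ∧ f ⁻¹' (⋂ i, K i) = ⋂ i, K i ∧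
      ENNReal.ofReal α ≤ m (statBasin f (⋂ i, K i)) :=
  iInter_chain_statBasin_measure_general hf (antitone_nat_of_succ_le hdec).directed_ge hne hc hinv
    ⟨0, measure_ne_top m _⟩ hbasin
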